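/- Let γ ∈ (0,1), H ≥ 1, P_1, ..., P_{H-1} row-stochastic matrices, and φ ≥ 0 a nonnegative vector. Then the entrywise square of β := (I + ∑_{h=1}^{H-1} γ^h ∏_{k=1}^h P_k) √φ satisfies |β|² ≤ (1/(1-γ)) ∑_{h=0}^{H-1} γ^h ∏_{k=1}^h P_k φ entrywise, where √φ is the entrywise square root. -/

import Mathlib

/-! The inequality is weighted Cauchy–Schwarz, `(∑ w x)² ≤ (∑ w) ∑ w x²`, applied twice: to a row
of a product of the `P k`, whose weights sum to at most `1`, and to the discount factors `γ ^ h`,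
whose sum is at most `1 / (1 - γ)`. -/

open Finset Matrix

theorem sq_sum_mul_le_mul_sum_mul_sq {ι R : Type*} [CommSemiring R] [LinearOrder R]
    [IsStrictOrderedRing R] [ExistsAddOfLE R] {s : Finset ι} {w : ι → R} {c : R}
    (hw : ∀ i ∈ s, 0 ≤ w i) (hc : ∑ i ∈ s, w i ≤ c) (x : ι → R) :
    (∑ i ∈ s, w i * x i) ^ 2 ≤ c * ∑ i ∈ s, w i * x i ^ 2 := by
  have hwx : ∀ i ∈ s, 0 ≤ w i * x i ^ 2 := fun i hi => mul_nonneg (hw i hi) (sq_nonneg _)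
  calc
    (∑ i ∈ s, w i * x i) ^ 2 ≤ (∑ i ∈ s, w i) * ∑ i ∈ s, w i * x i ^ 2 :=
      sum_sq_le_sum_mul_sum_of_sq_le_mul s hw hwx fun i _ => le_of_eq (by ring)
    _ ≤ c * ∑ i ∈ s, w i * x i ^ 2 := mul_le_mul_of_nonneg_right hc (sum_nonneg hwx)

/-- The submonoid of row-substochastic matrices: nonnegative square matrices whose row sums are at
most `1`, in analogy with `Matrix.rowStochastic`. -/
def rowSubstochastic (R n : Type*) [Fintype n] [DecidableEq n] [Semiring R] [PartialOrder R]
    [IsOrderedRing R] : Submonoid (Matrix n n R) where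
  carrier := {M | (∀ i j, 0 ≤ M i j) ∧ ∀ i, ∑ j, M i j ≤ 1}
  one_mem' := ⟨fun i j => by rw [one_apply]; split_ifs <;> simp, fun i => by simp [one_apply]⟩
  mul_mem' {M N} hM hN := by
    refine ⟨fun i j => sum_nonneg fun k _ => mul_nonneg (hM.1 i k) (hN.1 k j), fun i => ?_⟩
    calc
      ∑ j, (M * N) i j = ∑ k, M i k * ∑ j, N k j := by
        simp only [mul_apply, mul_sum]
        exact sum_comm
      _ ≤ ∑ k, M i k :=
        sum_le_sum fun k _ => mul_le_of_le_one_right (hM.1 i k) (hN.2 k)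
      _ ≤ 1 := hM.2 i

section Substochastic

variable {R m n ι : Type*} [Fintype n]

theorem sq_mulVec_le_mulVec_sq [CommSemiring R] [LinearOrder R] [IsStrictOrderedRing R]
    [ExistsAddOfLE R] {M : Matrix m n R} {i : m} (hM : ∀ j, 0 ≤ M i j) (hsum : ∑ j, M i j ≤ 1)
    (x : n → R) : (M *ᵥ x) i ^ 2 ≤ (M *ᵥ fun j => x j ^ 2) i := by
  simpa only [one_mul, mulVec, dotProduct] using
    sq_sum_mul_le_mul_sum_mul_sq (fun j _ => hM j) hsum x

theorem sq_sum_mul_mulVec_le [CommSemiring R] [LinearOrder R] [IsStrictOrderedRing R]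
    [ExistsAddOfLE R] {s : Finset ι} {w : ι → R} {c : R} {Q : ι → Matrix m n R} {i : m}
    (hw : ∀ h ∈ s, 0 ≤ w h) (hc : ∑ h ∈ s, w h ≤ c) (hQ : ∀ h ∈ s, ∀ j, 0 ≤ Q h i j)
    (hsum : ∀ h ∈ s, ∑ j, Q h i j ≤ 1) (x : n → R) :
    (∑ h ∈ s, w h * (Q h *ᵥ x) i) ^ 2 ≤ c * ∑ h ∈ s, w h * (Q h *ᵥ fun j => x j ^ 2) i := by
  have hc₀ : 0 ≤ c := (sum_nonneg hw).trans hc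
  calc
    (∑ h ∈ s, w h * (Q h *ᵥ x) i) ^ 2 ≤ c * ∑ h ∈ s, w h * (Q h *ᵥ x) i ^ 2 :=
      sq_sum_mul_le_mul_sum_mul_sq hw hc _
    _ ≤ c * ∑ h ∈ s, w h * (Q h *ᵥ fun j => x j ^ 2) i := by
      gcongr with h hh
      · exact hw h hh
      · exact sq_mulVec_le_mulVec_sq (hQ h hh) (hsum h hh) x

theorem stmt8_general [DecidableEq n] [Field R] [LinearOrder R] [IsStrictOrderedRing R]
    {γ : R} (hγ₀ : 0 ≤ γ) (hγ₁ : γ < 1) {H : ℕ} (hH : 1 ≤ H) {P : ℕ → Matrix n n R}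
    (hP : ∀ k, 1 ≤ k → k ≤ H - 1 → P k ∈ rowSubstochastic R n) (x : n → R) (i : n) :
    (x i + ∑ h ∈ Icc 1 (H - 1), γ ^ h *
        (((List.range h).map (fun k => P (k + 1))).prod *ᵥ x) i) ^ 2
      ≤ (1 / (1 - γ)) * ∑ h ∈ range H, γ ^ h *
          (((List.range h).map (fun k => P (k + 1))).prod *ᵥ fun j => x j ^ 2) i := by
  set Q : ℕ → Matrix n n R := fun h => ((List.range h).map (fun k => P (k + 1))).prod with hQ_def
  have hQ : ∀ h ∈ range H, Q h ∈ rowSubstochastic R n := fun h hh =>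
    Submonoid.list_prod_mem _ <| List.forall_mem_map.2 fun k hk =>
      hP (k + 1) (by lia) (by grind)
  have hgeom : ∑ h ∈ range H, γ ^ h ≤ 1 / (1 - γ) := by
    simpa only [range_eq_Ico, pow_zero] using
      geom_sum_Ico_le_of_lt_one (m := 0) (n := H) hγ₀ hγ₁
  have hsplit : ∑ h ∈ range H, γ ^ h * (Q h *ᵥ x) i =
      x i + ∑ h ∈ Icc 1 (H - 1), γ ^ h * (Q h *ᵥ x) i := by
    rw [range_eq_Ico, sum_eq_sum_Ico_succ_bot hH,
      Icc_sub_one_right_eq_Ico_of_not_isMin (by simpa using by lia)]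
    simp [hQ_def]
  rw [← hsplit]
  exact sq_sum_mul_mulVec_le (fun h _ => pow_nonneg hγ₀ h) hgeom
    (fun h hh => (hQ h hh).1 i) (fun h hh => (hQ h hh).2 i) x

end Substochastic

theorem stmt8 {n : Type*} [Fintype n] [DecidableEq n]
    (γ : ℝ) (hγ : 0 < γ ∧ γ < 1) (H : ℕ) (hH : 1 ≤ H)
    (P : ℕ → Matrix n n ℝ)
    (hP : ∀ k, 1 ≤ k → k ≤ H - 1 → (∀ i j, 0 ≤ P k i j) ∧ ∀ i, ∑ j, P k i j = 1)
    (φ : n → ℝ) (hφ : ∀ i, 0 ≤ φ i) :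
    ∀ i,
      (Real.sqrt (φ i) + ∑ h ∈ Finset.Icc 1 (H - 1), γ ^ h *
        (((List.range h).map (fun k => P (k + 1))).prod.mulVec
          (fun j => Real.sqrt (φ j))) i) ^ 2
      ≤ (1 / (1 - γ)) * ∑ h ∈ Finset.range H, γ ^ h *
          (((List.range h).map (fun k => P (k + 1))).prod.mulVec φ) i := by
  simpa only [Real.sq_sqrt (hφ _)] using stmt8_general hγ.1.le hγ.2 hH
    (fun k hk hkH => (hP k hk hkH).imp_right fun hsum i => (hsum i).le) fun j => Real.sqrt (φ j)
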